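/- Let n ≥ 1, m ≥ 1, L ≥ μ > 0, κ := L/μ, λ ∈ [0,1), and let H_α be the 4×4 real matrix with rows [ (1+λ²)/2, 0, 0, 2λ²α²L²/(1−λ²) ], [ αL, 1 − μα, α²L²/n, 0 ], [ 8mα²L² + 9/(4m), 16mα²L², 1 − 1/(4m), 0 ], [ 31/(1−λ²), 64λ²α²L²/(1−λ²), 97/8, (1+λ²)/2 ]. If 0 < α ≤ ᾱ₂ := min{ (1−λ²)²/(55λL), (1−λ²)/(13λκ^{1/4}L), (1−λ²)³/(388λ²nL), n^{1/3}/(10.5·m^{2/3}κ^{1/3}L), 1/(36L), (1−λ²)/(2μ), 1/(4mμ) } (terms with λ in the denominator interpreted as +∞ when λ = 0), then the spectral radius of H_α satisfies ρ(H_α) ≤ 1 − μα/2. -/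

import Mathlib

open MeasureTheory ProbabilityTheory Finset Filter
open scoped ENNReal RealInnerProductSpace

noncomputable section

/-- The second largest singular value of a doubly stochastic matrix `w`, realized as the
operator norm of `w - (1/n) 𝟙ₙ 𝟙ₙᵀ` acting on `EuclideanSpace ℝ (Fin n)`. -/
def secondSV {n : ℕ} (w : Matrix (Fin n) (Fin n) ℝ) : ℝ :=
  ‖LinearMap.toContinuousLinearMap
      (Matrix.toEuclideanLin (w - Matrix.of fun _ _ => (n : ℝ)⁻¹))‖

/-- The average `(1/n) ∑ᵢ vᵢ` of the blocks of a stacked vector `v ∈ ℝ^{np}`. -/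
def blockAvg {n p : ℕ} (v : Fin n → EuclideanSpace ℝ (Fin p)) : EuclideanSpace ℝ (Fin p) :=
  (n : ℝ)⁻¹ • ∑ i, v i

/-- `‖v - J v‖²` for a stacked vector `v ∈ ℝ^{np}`, where `J = ((1/n) 𝟙ₙ 𝟙ₙᵀ) ⊗ Iₚ`. -/
def consSq {n p : ℕ} (v : Fin n → EuclideanSpace ℝ (Fin p)) : ℝ :=
  ∑ i, ‖v i - blockAvg v‖ ^ 2

/-- `(W - J) v`, blockwise, where `W = w ⊗ Iₚ` and `J = ((1/n) 𝟙ₙ 𝟙ₙᵀ) ⊗ Iₚ`. -/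
def WJapp {n p : ℕ} (w : Matrix (Fin n) (Fin n) ℝ) (v : Fin n → EuclideanSpace ℝ (Fin p)) :
    Fin n → EuclideanSpace ℝ (Fin p) :=
  fun i => (∑ r, w i r • v r) - blockAvg v

/-- The local batch function `fᵢ := (1/m) ∑ⱼ f_{i,j}`. -/
def floc {n m p : ℕ} (f : Fin n → Fin m → EuclideanSpace ℝ (Fin p) → ℝ) (i : Fin n) :
    EuclideanSpace ℝ (Fin p) → ℝ :=
  fun u => (m : ℝ)⁻¹ * ∑ j, f i j u

/-- The global function `F := (1/n) ∑ᵢ fᵢ`. -/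
def fglob {n m p : ℕ} (f : Fin n → Fin m → EuclideanSpace ℝ (Fin p) → ℝ) :
    EuclideanSpace ℝ (Fin p) → ℝ :=
  fun u => (n : ℝ)⁻¹ * ∑ i, floc f i u

/-- `F* := inf_x F(x)`. -/
def Fstar {n m p : ℕ} (f : Fin n → Fin m → EuclideanSpace ℝ (Fin p) → ℝ) : ℝ :=
  ⨅ u, fglob f u

/-- `∇f̄(x) := (1/n) ∑ᵢ ∇fᵢ(xᵢ)`. -/
def gradfbar {n m p : ℕ} (f : Fin n → Fin m → EuclideanSpace ℝ (Fin p) → ℝ)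
    (v : Fin n → EuclideanSpace ℝ (Fin p)) : EuclideanSpace ℝ (Fin p) :=
  (n : ℝ)⁻¹ • ∑ i, gradient (floc f i) (v i)

/-- The auxiliary quantity `t := (1/n) ∑ᵢ (1/m) ∑ⱼ ‖x̄ - z_{i,j}‖²`. -/
def tAux {n m p : ℕ} (xbar : EuclideanSpace ℝ (Fin p))
    (z : Fin n → Fin m → EuclideanSpace ℝ (Fin p)) : ℝ :=
  (n : ℝ)⁻¹ * ∑ i, (m : ℝ)⁻¹ * ∑ j, ‖xbar - z i j‖ ^ 2

/-- The filtration `F^k := σ(τᵢᵗ, sᵢᵗ : i ∈ V, t ≤ k-1)`, with `F⁰` trivial. -/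
def gtFilt {Ω : Type*} {n m : ℕ} (τ s : Fin n → ℕ → Ω → Fin m) (k : ℕ) :
    MeasurableSpace Ω :=
  ⨆ (i : Fin n) (t : ℕ) (_ : t < k),
    MeasurableSpace.comap (τ i t) ⊤ ⊔ MeasurableSpace.comap (s i t) ⊤


/-!
If `X` is nonnegative and `X s ≤ β s` for a positive vector `s`, then the absolute row sums of
`D⁻¹ X D`, where `D = diag s`, are at most `β`, and Gershgorin's theorem bounds every eigenvalue
by `β`.

For `X = H_α` and `β = 1 - μα/2`, only `αL` and `μ/L` matter, so one may take `L = 1`. In the test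
vector, `s₃` makes the second row of `X s ≤ β s` an equality, and `s₄` is chosen so that
`(1 - λ²)/4 · s₄` equals the off-diagonal part of the fourth row. The third row then amounts to the
cube-root condition on `α`. In the first row the three summands of `s₄` are controlled separately:
the `κ`-independent one by the fourth-root condition, the other two by
`α ≤ (1 - λ²)³ / (388 λ² n L)`, which together with `36 αL ≤ 1` forces `30 αL ≤ 1 - λ²`.
-/

theorem norm_le_of_mem_spectrum_of_sum_norm_mul_le {𝕜 ι : Type*} [RCLike 𝕜] [Fintype ι]
    [DecidableEq ι] {A : Matrix ι ι 𝕜} {s : ι → ℝ} {β : ℝ} (hs : ∀ i, 0 < s i)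
    (hle : ∀ i, ∑ j, ‖A i j‖ * s j ≤ β * s i) {c : 𝕜} (hc : c ∈ spectrum 𝕜 A) : ‖c‖ ≤ β := by
  have hs' (i : ι) : (s i : 𝕜) ≠ 0 := RCLike.ofReal_ne_zero.mpr (hs i).ne'
  let D : (Matrix ι ι 𝕜)ˣ :=
    ⟨Matrix.diagonal fun i => (s i : 𝕜), Matrix.diagonal fun i => (s i : 𝕜)⁻¹,
      by simp [hs'], by simp [hs']⟩
  let B : Matrix ι ι 𝕜 := (D⁻¹ : (Matrix ι ι 𝕜)ˣ) * A * (D : Matrix ι ι 𝕜)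
  have hB (i j : ι) : ‖B i j‖ = (s i)⁻¹ * (‖A i j‖ * s j) := by
    simp [B, D, Matrix.diagonal_mul, Matrix.mul_diagonal, abs_of_pos (hs _), mul_assoc]
  have hcB : Module.End.HasEigenvalue (Matrix.toLin' B) c := by
    rwa [Module.End.hasEigenvalue_iff_mem_spectrum, Matrix.spectrum_toLin',
      spectrum.units_conjugate']
  obtain ⟨k, hk⟩ := eigenvalue_mem_ball hcB
  calc ‖c‖ ≤ ‖B k k‖ + ‖c - B k k‖ := norm_le_norm_add_norm_sub' c (B k k)
    _ ≤ ‖B k k‖ + ∑ j ∈ univ.erase k, ‖B k j‖ := by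
      gcongr
      exact mem_closedBall_iff_norm.mp hk
    _ = ∑ j, ‖B k j‖ := add_sum_erase _ (fun j => ‖B k j‖) (mem_univ k)
    _ = (s k)⁻¹ * ∑ j, ‖A k j‖ * s j := by simp only [hB, mul_sum]
    _ ≤ β := (inv_mul_le_iff₀ (hs k)).mpr ((hle k).trans_eq (mul_comm _ _))

theorem norm_le_of_mem_spectrum_of_mulVec_le {𝕜 ι : Type*} [RCLike 𝕜] [Fintype ι]
    [DecidableEq ι] {X : Matrix ι ι ℝ} {s : ι → ℝ} {β : ℝ} (hX : ∀ i j, 0 ≤ X i j)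
    (hs : ∀ i, 0 < s i) (hle : X.mulVec s ≤ β • s) {c : 𝕜}
    (hc : c ∈ spectrum 𝕜 (X.map (algebraMap ℝ 𝕜))) : ‖c‖ ≤ β := by
  refine norm_le_of_mem_spectrum_of_sum_norm_mul_le hs (fun i => ?_) hc
  simpa [abs_of_nonneg (hX _ _), Matrix.mulVec, dotProduct] using hle i

theorem pow_mul_le_pow_of_mul_rpow_one_div_le {x y κ : ℝ} {k : ℕ} (hx : 0 ≤ x) (hκ : 0 ≤ κ)
    (hk : k ≠ 0) (h : x * κ ^ ((1 : ℝ) / k) ≤ y) : x ^ k * κ ≤ y ^ k :=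
  calc x ^ k * κ = (x * κ ^ ((1 : ℝ) / k)) ^ k := by
        rw [mul_pow, one_div, Real.rpow_inv_natCast_pow hκ hk]
    _ ≤ y ^ k := by gcongr

theorem pow_four_le_of_le_div_rpow {ν lam κ L α : ℝ} (hlam : 0 < lam) (hκ : 0 < κ) (hL : 0 < L)
    (hα : 0 ≤ α) (h : α ≤ ν / (13 * lam * κ ^ ((1 : ℝ) / 4) * L)) :
    13 ^ 4 * lam ^ 4 * (α * L) ^ 4 ≤ ν ^ 4 * κ⁻¹ := by
  rw [← div_eq_mul_inv, le_div_iff₀ hκ]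
  rw [le_div_iff₀ (by positivity)] at h
  have h4 : 13 * lam * (α * L) * κ ^ ((1 : ℝ) / (4 : ℕ)) ≤ ν := by
    rw [Nat.cast_ofNat]
    linarith
  calc 13 ^ 4 * lam ^ 4 * (α * L) ^ 4 * κ = (13 * lam * (α * L)) ^ 4 * κ := by ring
    _ ≤ ν ^ 4 := pow_mul_le_pow_of_mul_rpow_one_div_le (by positivity) hκ.le four_ne_zero h4

theorem pow_three_le_of_le_rpow_div {n m κ L α : ℝ} (hn : 0 ≤ n) (hm : 0 < m) (hκ : 0 < κ)
    (hL : 0 < L) (hα : 0 ≤ α) (h : α ≤ n ^ ((1 : ℝ) / 3)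
      / (10.5 * m ^ ((2 : ℝ) / 3) * κ ^ ((1 : ℝ) / 3) * L)) :
    10.5 ^ 3 * m ^ 2 * (α * L) ^ 3 ≤ n * κ⁻¹ := by
  rw [← div_eq_mul_inv, le_div_iff₀ hκ]
  rw [le_div_iff₀ (by positivity)] at h
  have h3 : 10.5 * m ^ ((2 : ℝ) / 3) * (α * L) * κ ^ ((1 : ℝ) / (3 : ℕ)) ≤ n ^ ((1 : ℝ) / 3) := by
    rw [Nat.cast_ofNat]
    linarith
  have hn3 : (n ^ ((1 : ℝ) / 3)) ^ 3 = n := by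
    rw [← Real.rpow_mul_natCast hn]
    norm_num
  have hm3 : (m ^ ((2 : ℝ) / 3)) ^ 3 = m ^ 2 := by
    rw [← Real.rpow_mul_natCast hm.le]
    norm_num
  calc 10.5 ^ 3 * m ^ 2 * (α * L) ^ 3 * κ
      = (10.5 * m ^ ((2 : ℝ) / 3) * (α * L)) ^ 3 * κ := by rw [← hm3]; ring
    _ ≤ (n ^ ((1 : ℝ) / 3)) ^ 3 :=
      pow_mul_le_pow_of_mul_rpow_one_div_le (by positivity) hκ.le three_ne_zero h3
    _ = n := hn3

/-- The matrix `H_α` of the linear system bounding the errors of GT-SAGA, with the numbers `n` of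
nodes and `m` of samples per node allowed to be real. -/
def gtsagaMatrix (n m L mu lam α : ℝ) : Matrix (Fin 4) (Fin 4) ℝ :=
  !![(1 + lam ^ 2) / 2, 0, 0, 2 * lam ^ 2 * α ^ 2 * L ^ 2 / (1 - lam ^ 2);
     α * L, 1 - mu * α, α ^ 2 * L ^ 2 / n, 0;
     8 * m * α ^ 2 * L ^ 2 + 9 / (4 * m), 16 * m * α ^ 2 * L ^ 2, 1 - 1 / (4 * m), 0;
     31 / (1 - lam ^ 2), 64 * lam ^ 2 * α ^ 2 * L ^ 2 / (1 - lam ^ 2), 97 / 8,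
       (1 + lam ^ 2) / 2]

/-- The vector `s` for which `H_α s ≤ (1 - μα/2) s` is shown, in the case `L = 1`, where the
condition number `κ` is `1 / mu`. -/
def gtsagaTestVector (n mu lam α : ℝ) : Fin 4 → ℝ :=
  ![mu / 4, 1, n * mu / (4 * α),
    31 * mu / (1 - lam ^ 2) ^ 2 + 256 * lam ^ 2 * α ^ 2 / (1 - lam ^ 2) ^ 2
      + 97 * n * mu / (8 * (1 - lam ^ 2) * α)]

section

variable {n m L mu lam α : ℝ}

theorem gtsagaMatrix_eq_rescale (hL : L ≠ 0) :
    gtsagaMatrix n m L mu lam α = gtsagaMatrix n m 1 (mu / L) lam (α * L) := by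
  have hmuα : mu / L * (α * L) = mu * α := by field_simp
  simp only [gtsagaMatrix, hmuα, mul_pow, one_pow, mul_one, mul_assoc]

theorem gtsagaMatrix_nonneg (hn : 0 ≤ n) (hm : 1 / 4 ≤ m) (hαL : 0 ≤ α * L)
    (hmuα : mu * α ≤ 1) (hlam : lam ^ 2 ≤ 1) (i j : Fin 4) :
    0 ≤ gtsagaMatrix n m L mu lam α i j := by
  have : 0 ≤ m := by linarith
  have hmuα' : 0 ≤ 1 - mu * α := sub_nonneg.mpr hmuα
  have : 0 ≤ 1 - lam ^ 2 := sub_nonneg.mpr hlam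
  have hm' : 0 ≤ 1 - 1 / (4 * m) := sub_nonneg.mpr (div_le_one_of_le₀ (by linarith) (by linarith))
  fin_cases i <;> fin_cases j <;>
    first | exact hαL | exact hmuα' | exact hm' | exact le_rfl |
      (simp only [gtsagaMatrix, Fin.zero_eta, Fin.mk_one, Fin.reduceFinMk, Matrix.of_apply,
        Matrix.cons_val', Matrix.cons_val]; positivity)

theorem gtsagaTestVector_pos (hn : 0 < n) (hmu : 0 < mu) (hlam : 0 < 1 - lam ^ 2) (hα : 0 < α)
    (i : Fin 4) : 0 < gtsagaTestVector n mu lam α i := by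
  fin_cases i <;>
    simp only [gtsagaTestVector, Fin.zero_eta, Fin.mk_one, Fin.reduceFinMk, Matrix.cons_val] <;>
    positivity

theorem thirty_mul_le_one_sub_sq (hn : 1 ≤ n) (hlam : 0 < 1 - lam ^ 2) (hα : 0 ≤ α)
    (hα_gap : 388 * lam ^ 2 * n * α ≤ (1 - lam ^ 2) ^ 3) (hα_le : 36 * α ≤ 1) :
    30 * α ≤ 1 - lam ^ 2 := by
  rcases le_total (lam ^ 2) (1 / 6) with hsmall | hlarge
  · linarith
  · calc 30 * α ≤ 388 * (1 / 6) * 1 * α := by linarith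
      _ ≤ 388 * lam ^ 2 * n * α := by gcongr
      _ ≤ (1 - lam ^ 2) ^ 3 := hα_gap
      _ ≤ 1 - lam ^ 2 := pow_le_of_le_one hlam.le (by linarith) three_ne_zero

theorem gtsagaMatrix_mulVec (s : Fin 4 → ℝ) :
    (gtsagaMatrix n m L mu lam α).mulVec s =
      ![(1 + lam ^ 2) / 2 * s 0 + 2 * lam ^ 2 * α ^ 2 * L ^ 2 / (1 - lam ^ 2) * s 3,
        α * L * s 0 + (1 - mu * α) * s 1 + α ^ 2 * L ^ 2 / n * s 2,
        (8 * m * α ^ 2 * L ^ 2 + 9 / (4 * m)) * s 0 + 16 * m * α ^ 2 * L ^ 2 * s 1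
          + (1 - 1 / (4 * m)) * s 2,
        31 / (1 - lam ^ 2) * s 0 + 64 * lam ^ 2 * α ^ 2 * L ^ 2 / (1 - lam ^ 2) * s 1
          + 97 / 8 * s 2 + (1 + lam ^ 2) / 2 * s 3] := by
  ext i
  fin_cases i <;> simp [gtsagaMatrix, Matrix.mulVec, dotProduct, Fin.sum_univ_four]

theorem coupling_mul_gtsagaTestVector_three_le (hn : 1 ≤ n) (hmu : 0 < mu)
    (hlam : 0 < 1 - lam ^ 2) (hα : 0 < α) (hα_le : 30 * α ≤ 1 - lam ^ 2)
    (hα_fourth : 13 ^ 4 * lam ^ 4 * α ^ 4 ≤ (1 - lam ^ 2) ^ 4 * mu)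
    (hα_gap : 388 * lam ^ 2 * n * α ≤ (1 - lam ^ 2) ^ 3) :
    2 * lam ^ 2 * α ^ 2 / (1 - lam ^ 2) * gtsagaTestVector n mu lam α 3
      ≤ mu * (1 - lam ^ 2) / 11 := by
  simp only [gtsagaTestVector, Matrix.cons_val]
  generalize 1 - lam ^ 2 = ν at *
  have hsq : lam ^ 2 * α ^ 2 * mu / ν ^ 3 ≤ mu * ν / (30 * 388) := by
    have hgap_one : 388 * lam ^ 2 * 1 * α ≤ ν ^ 3 := le_trans (by gcongr) hα_gap
    rw [div_le_iff₀ (by positivity)]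
    calc lam ^ 2 * α ^ 2 * mu = mu / (30 * 388) * ((388 * lam ^ 2 * 1 * α) * (30 * α)) := by ring
      _ ≤ mu / (30 * 388) * (ν ^ 3 * ν) := by gcongr
      _ = mu * ν / (30 * 388) * ν ^ 3 := by ring
  have hfourth : lam ^ 4 * α ^ 4 / ν ^ 3 ≤ mu * ν / 13 ^ 4 := by
    rw [div_le_iff₀ (by positivity)]
    linarith
  have hgap : lam ^ 2 * n * α * mu / ν ^ 2 ≤ mu * ν / 388 := by
    rw [div_le_iff₀ (by positivity)]
    linarith [mul_le_mul_of_nonneg_right hα_gap hmu.le]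
  calc _ = 62 * (lam ^ 2 * α ^ 2 * mu / ν ^ 3) + 512 * (lam ^ 4 * α ^ 4 / ν ^ 3)
        + 97 / 4 * (lam ^ 2 * n * α * mu / ν ^ 2) := by
        field_simp
        ring
    _ ≤ 62 * (mu * ν / (30 * 388)) + 512 * (mu * ν / 13 ^ 4) + 97 / 4 * (mu * ν / 388) := by
        gcongr
    _ ≤ mu * ν / 11 := by linarith [mul_pos hmu hlam]

theorem gtsagaMatrix_mulVec_zero_le (hmu : 0 < mu) (hmu1 : mu ≤ 1)
    (hlam : 0 < 1 - lam ^ 2) (hα : 0 ≤ α) (hα_le : 30 * α ≤ 1 - lam ^ 2)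
    (hcoupling : 2 * lam ^ 2 * α ^ 2 / (1 - lam ^ 2) * gtsagaTestVector n mu lam α 3
      ≤ mu * (1 - lam ^ 2) / 11) :
    (gtsagaMatrix n m 1 mu lam α).mulVec (gtsagaTestVector n mu lam α) 0
      ≤ (1 - mu * α / 2) * gtsagaTestVector n mu lam α 0 := by
  simp only [gtsagaMatrix_mulVec, Matrix.cons_val, one_pow, mul_one]
  have hzero : gtsagaTestVector n mu lam α 0 = mu / 4 := rfl
  have hmuα : mu * α ≤ α := mul_le_of_le_one_left hα hmu1
  have hdecay : mu * (1 - lam ^ 2) / 11 ≤ ((1 - lam ^ 2) / 2 - mu * α / 2) * (mu / 4) :=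
    calc mu * (1 - lam ^ 2) / 11 ≤ ((1 - lam ^ 2) / 2 - (1 - lam ^ 2) / 60) * (mu / 4) := by
          linarith [mul_pos hmu hlam]
      _ ≤ ((1 - lam ^ 2) / 2 - mu * α / 2) * (mu / 4) := by
          gcongr ?_ * (mu / 4)
          linarith
  rw [hzero]
  linarith

theorem gtsagaMatrix_mulVec_one_eq (hn : n ≠ 0) :
    (gtsagaMatrix n m 1 mu lam α).mulVec (gtsagaTestVector n mu lam α) 1
      = (1 - mu * α / 2) * gtsagaTestVector n mu lam α 1 := by
  simp only [gtsagaMatrix_mulVec, gtsagaTestVector, Matrix.cons_val, one_pow, mul_one]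
  field_simp
  ring

theorem gtsagaMatrix_mulVec_two_le (hn : 1 ≤ n) (hm : 0 < m) (hmu : 0 < mu) (hmu1 : mu ≤ 1)
    (hα : 0 < α) (hα_cube : 10.5 ^ 3 * m ^ 2 * α ^ 3 ≤ n * mu) (hα_le : 36 * α ≤ 1)
    (hα_batch : 4 * m * (mu * α) ≤ 1) :
    (gtsagaMatrix n m 1 mu lam α).mulVec (gtsagaTestVector n mu lam α) 2
      ≤ (1 - mu * α / 2) * gtsagaTestVector n mu lam α 2 := by
  simp only [gtsagaMatrix_mulVec, gtsagaTestVector, Matrix.cons_val, one_pow, mul_one]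
  have hdecay : 1 / (8 * m) ≤ 1 / (4 * m) - mu * α / 2 := by
    have : mu * α ≤ 1 / (4 * m) := by
      rw [le_div_iff₀ (by positivity)]
      linarith
    have : 1 / (8 * m) = 1 / (4 * m) / 2 := by
      field_simp
      norm_num
    linarith
  have hmuα : 36 * (mu * α) ≤ n * mu := by nlinarith
  have hpos : 0 < m ^ 2 * α ^ 3 := by positivity
  have hcube : m ^ 2 * α ^ 3 * mu ≤ m ^ 2 * α ^ 3 := mul_le_of_le_one_right hpos.le hmu1
  have hcoupling : (8 * m * α ^ 2 + 9 / (4 * m)) * (mu / 4) + 16 * m * α ^ 2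
      ≤ (1 / (4 * m) - mu * α / 2) * (n * mu / (4 * α)) :=
    calc _ = (64 * (m ^ 2 * α ^ 3 * mu) + 18 * (mu * α) + 512 * (m ^ 2 * α ^ 3))
          / (32 * m * α) := by
          field_simp
          ring
      _ ≤ n * mu / (32 * m * α) := by
          gcongr
          linarith
      _ = 1 / (8 * m) * (n * mu / (4 * α)) := by
          field_simp
          norm_num
      _ ≤ _ := by gcongr
  linarith

theorem gtsagaMatrix_mulVec_three_le (hn : 0 ≤ n) (hmu : 0 ≤ mu) (hlam : 0 < 1 - lam ^ 2)
    (hα : 0 < α) (hmuα : 2 * (mu * α) ≤ 1 - lam ^ 2) :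
    (gtsagaMatrix n m 1 mu lam α).mulVec (gtsagaTestVector n mu lam α) 3
      ≤ (1 - mu * α / 2) * gtsagaTestVector n mu lam α 3 := by
  simp only [gtsagaMatrix_mulVec, gtsagaTestVector, Matrix.cons_val, one_pow, mul_one]
  set ν := 1 - lam ^ 2
  set s₄ := 31 * mu / ν ^ 2 + 256 * lam ^ 2 * α ^ 2 / ν ^ 2 + 97 * n * mu / (8 * ν * α) with hs₄
  have hcoupling : 31 / ν * (mu / 4) + 64 * lam ^ 2 * α ^ 2 / ν + 97 / 8 * (n * mu / (4 * α))
      = ν / 4 * s₄ := by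
    rw [hs₄]
    field_simp
    ring
  have : 0 ≤ s₄ := by positivity
  have hdecay : ν / 4 * s₄ ≤ (ν / 2 - mu * α / 2) * s₄ := by
    gcongr
    linarith
  linarith

theorem gtsagaMatrix_mulVec_gtsagaTestVector_le (hn : 1 ≤ n) (hm : 0 < m) (hmu : 0 < mu)
    (hmu1 : mu ≤ 1) (hlam : 0 < 1 - lam ^ 2) (hα : 0 < α)
    (hα_fourth : 13 ^ 4 * lam ^ 4 * α ^ 4 ≤ (1 - lam ^ 2) ^ 4 * mu)
    (hα_gap : 388 * lam ^ 2 * n * α ≤ (1 - lam ^ 2) ^ 3)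
    (hα_cube : 10.5 ^ 3 * m ^ 2 * α ^ 3 ≤ n * mu) (hα_le : 36 * α ≤ 1)
    (hα_batch : 4 * m * (mu * α) ≤ 1) :
    (gtsagaMatrix n m 1 mu lam α).mulVec (gtsagaTestVector n mu lam α)
      ≤ (1 - mu * α / 2) • gtsagaTestVector n mu lam α := by
  have hα30 : 30 * α ≤ 1 - lam ^ 2 := thirty_mul_le_one_sub_sq hn hlam hα.le hα_gap hα_le
  have hmuα : mu * α ≤ α := mul_le_of_le_one_left hα.le hmu1
  intro i
  fin_cases i
  · exact gtsagaMatrix_mulVec_zero_le hmu hmu1 hlam hα.le hα30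
      (coupling_mul_gtsagaTestVector_three_le hn hmu hlam hα hα30 hα_fourth hα_gap)
  · exact (gtsagaMatrix_mulVec_one_eq (by linarith)).le
  · exact gtsagaMatrix_mulVec_two_le hn hm hmu hmu1 hα hα_cube hα_le hα_batch
  · exact gtsagaMatrix_mulVec_three_le (by linarith) hmu.le hlam hα (by linarith)

theorem norm_le_of_mem_spectrum_gtsagaMatrix_one (hn : 1 ≤ n) (hm : 1 / 4 ≤ m) (hmu : 0 < mu)
    (hmu1 : mu ≤ 1) (hlam : 0 < 1 - lam ^ 2) (hα : 0 < α)
    (hα_fourth : 13 ^ 4 * lam ^ 4 * α ^ 4 ≤ (1 - lam ^ 2) ^ 4 * mu)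
    (hα_gap : 388 * lam ^ 2 * n * α ≤ (1 - lam ^ 2) ^ 3)
    (hα_cube : 10.5 ^ 3 * m ^ 2 * α ^ 3 ≤ n * mu) (hα_le : 36 * α ≤ 1)
    (hα_batch : 4 * m * (mu * α) ≤ 1) {c : ℂ}
    (hc : c ∈ spectrum ℂ ((gtsagaMatrix n m 1 mu lam α).map (algebraMap ℝ ℂ))) :
    ‖c‖ ≤ 1 - mu * α / 2 := by
  have hn0 : 0 < n := by linarith
  have hmuα : mu * α ≤ 1 := by linarith [mul_le_of_le_one_left hα.le hmu1]
  exact norm_le_of_mem_spectrum_of_mulVec_le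
    (gtsagaMatrix_nonneg hn0.le hm (by linarith) hmuα (by linarith))
    (gtsagaTestVector_pos hn0 hmu hlam hα)
    (gtsagaMatrix_mulVec_gtsagaTestVector_le hn (by linarith) hmu hmu1 hlam hα hα_fourth hα_gap
      hα_cube hα_le hα_batch) hc

theorem gtsaga_H_spectral_radius_bound_general (hn : 1 ≤ n) (hm : 1 ≤ m) (hmu : 0 < mu)
    (hmuL : mu ≤ L) (hlam0 : 0 ≤ lam) (hlam1 : lam < 1) (hα0 : 0 < α)
    (hα_fourth : lam ≠ 0 → α ≤ (1 - lam ^ 2) / (13 * lam * (L / mu) ^ ((1 : ℝ) / 4) * L))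
    (hα_gap : lam ≠ 0 → α ≤ (1 - lam ^ 2) ^ 3 / (388 * lam ^ 2 * n * L))
    (hα_cube : α ≤ n ^ ((1 : ℝ) / 3)
      / (10.5 * m ^ ((2 : ℝ) / 3) * (L / mu) ^ ((1 : ℝ) / 3) * L))
    (hα_le : α ≤ 1 / (36 * L)) (hα_batch : α ≤ 1 / (4 * m * mu)) :
    ∀ c ∈ spectrum ℂ ((gtsagaMatrix n m L mu lam α).map (algebraMap ℝ ℂ)),
      ‖c‖ ≤ 1 - mu * α / 2 := by
  intro c hc
  have hL : 0 < L := hmu.trans_le hmuL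
  have hlam : 0 < 1 - lam ^ 2 := sub_pos.mpr (pow_lt_one₀ hlam0 hlam1 two_ne_zero)
  have hmuα : mu / L * (α * L) = mu * α := by field_simp
  have hfourth : 13 ^ 4 * lam ^ 4 * (α * L) ^ 4 ≤ (1 - lam ^ 2) ^ 4 * (mu / L) := by
    rw [← inv_div L mu]
    rcases hlam0.eq_or_lt' with rfl | hlam_pos
    · simpa using (by positivity : 0 ≤ mu / L)
    · exact pow_four_le_of_le_div_rpow hlam_pos (by positivity) hL hα0.le (hα_fourth hlam_pos.ne')
  have hgap : 388 * lam ^ 2 * n * (α * L) ≤ (1 - lam ^ 2) ^ 3 := by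
    rcases hlam0.eq_or_lt' with rfl | hlam_pos
    · simp
    · have := (le_div_iff₀ (by positivity)).mp (hα_gap hlam_pos.ne')
      linarith
  have hcube : 10.5 ^ 3 * m ^ 2 * (α * L) ^ 3 ≤ n * (mu / L) := by
    rw [← inv_div L mu]
    exact pow_three_le_of_le_rpow_div (by linarith) (by linarith) (by positivity) hL hα0.le hα_cube
  have hle : 36 * (α * L) ≤ 1 := by linarith [(le_div_iff₀ (by positivity)).mp hα_le]
  have hbatch : 4 * m * (mu / L * (α * L)) ≤ 1 := by
    rw [hmuα]
    linarith [(le_div_iff₀ (by positivity)).mp hα_batch]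
  rw [gtsagaMatrix_eq_rescale hL.ne'] at hc
  rw [← hmuα]
  exact norm_le_of_mem_spectrum_gtsagaMatrix_one hn (by linarith) (by positivity)
    ((div_le_one hL).mpr hmuL) hlam (by positivity) hfourth hgap hcube hle hbatch hc

end

/-- Spectral radius of the GT-SAGA LTI matrix `H_α` under the PL condition. -/
theorem gtsaga_H_spectral_radius_bound
    (n m : ℕ) (hn : 1 ≤ n) (hm : 1 ≤ m) (L mu lam α : ℝ)
    (hmu : 0 < mu) (hmuL : mu ≤ L) (hlam0 : 0 ≤ lam) (hlam1 : lam < 1) (hα0 : 0 < α)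
    (hα1 : lam ≠ 0 → α ≤ (1 - lam ^ 2) ^ 2 / (55 * lam * L))
    (hα2 : lam ≠ 0 → α ≤ (1 - lam ^ 2) / (13 * lam * (L / mu) ^ ((1 : ℝ) / 4) * L))
    (hα3 : lam ≠ 0 → α ≤ (1 - lam ^ 2) ^ 3 / (388 * lam ^ 2 * n * L))
    (hα4 : α ≤ (n : ℝ) ^ ((1 : ℝ) / 3)
      / (10.5 * (m : ℝ) ^ ((2 : ℝ) / 3) * (L / mu) ^ ((1 : ℝ) / 3) * L))
    (hα5 : α ≤ 1 / (36 * L))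
    (hα6 : α ≤ (1 - lam ^ 2) / (2 * mu))
    (hα7 : α ≤ 1 / (4 * m * mu)) :
    let H : Matrix (Fin 4) (Fin 4) ℝ :=
      !![(1 + lam ^ 2) / 2, 0, 0, 2 * lam ^ 2 * α ^ 2 * L ^ 2 / (1 - lam ^ 2);
         α * L, 1 - mu * α, α ^ 2 * L ^ 2 / n, 0;
         8 * m * α ^ 2 * L ^ 2 + 9 / (4 * m), 16 * m * α ^ 2 * L ^ 2, 1 - 1 / (4 * m), 0;
         31 / (1 - lam ^ 2), 64 * lam ^ 2 * α ^ 2 * L ^ 2 / (1 - lam ^ 2), 97 / 8,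
           (1 + lam ^ 2) / 2]
    ∀ c ∈ spectrum ℂ (H.map (algebraMap ℝ ℂ)), ‖c‖ ≤ 1 - mu * α / 2 := by
  exact gtsaga_H_spectral_radius_bound_general (mod_cast hn) (mod_cast hm) hmu hmuL hlam0 hlam1
    hα0 hα2 hα3 hα4 hα5 hα7

end
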